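/- Let μ be a weak Gibbs measure for an asymptotically additive sequence Φ = (φ_n)_n on a topologically mixing one-sided subshift of finite type (Σ,σ). Then there exists an asymptotically additive sequence Ψ = (ψ_n)_n on Σ such that μ is a Gibbs measure for Ψ; in fact one may take ψ_n(ω) := log μ(C_{i₁…i_n}) for ω ∈ C_{i₁…i_n}, and then P(Ψ) = 0 and μ(C_{i₁…i_n})/exp(ψ_n(ω) − nP(Ψ)) = 1 for every n, every cylinder C_{i₁…i_n} and every ω ∈ C_{i₁…i_n}. -/

import Mathlib

open MeasureTheory Filter Topology Set

namespace WG

/-- The one-sided subshift of finite type determined by a 0-1 transition matrix `M`. -/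
abbrev Space {k : ℕ} (M : Matrix (Fin k) (Fin k) ℕ) : Type :=
  {ω : ℕ → Fin k // ∀ i : ℕ, M (ω i) (ω (i + 1)) = 1}

variable {k : ℕ}

/-- The shift map on the subshift. -/
def shift (M : Matrix (Fin k) (Fin k) ℕ) (ω : Space M) : Space M :=
  ⟨fun i => ω.1 (i + 1), fun i => ω.2 (i + 1)⟩

/-- `M` is a 0-1 matrix and the subshift is topologically mixing:
some power of `M` has all entries strictly positive. -/
def Mixing (M : Matrix (Fin k) (Fin k) ℕ) : Prop :=
  (∀ i j, M i j = 0 ∨ M i j = 1) ∧ ∃ l : ℕ, 0 < l ∧ ∀ i j, 0 < (M ^ l) i j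

/-- The cylinder `C_{w₀ … w_{n-1}}`. -/
def cyl (M : Matrix (Fin k) (Fin k) ℕ) (n : ℕ) (w : Fin n → Fin k) : Set (Space M) :=
  {ω | ∀ j : Fin n, ω.1 j.1 = w j}

/-- The initial word of length `n` of a point `ω`. -/
def word (M : Matrix (Fin k) (Fin k) ℕ) (n : ℕ) (ω : Space M) : Fin n → Fin k :=
  fun j => ω.1 j.1

/-- Birkhoff sums `S_n f`. -/
noncomputable def birk (M : Matrix (Fin k) (Fin k) ℕ) (f : Space M → ℝ) (n : ℕ)
    (ω : Space M) : ℝ :=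
  ∑ j ∈ Finset.range n, f ((shift M)^[j] ω)

/-- The standard metric `d(ω,κ) = ∑ᵢ |ωᵢ - κᵢ| / 2^{i+1}` on the shift space. -/
noncomputable def dist' (M : Matrix (Fin k) (Fin k) ℕ) (ω κ : Space M) : ℝ :=
  ∑' i : ℕ, |((ω.1 i : ℕ) : ℝ) - ((κ.1 i : ℕ) : ℝ)| / 2 ^ (i + 1)

/-- `E` is an `(n,ε)`-separated set. -/
def IsSep (M : Matrix (Fin k) (Fin k) ℕ) (n : ℕ) (ε : ℝ) (E : Finset (Space M)) : Prop :=
  ∀ ω ∈ E, ∀ κ ∈ E, ω ≠ κ → ∃ i < n, ε < dist' M ((shift M)^[i] ω) ((shift M)^[i] κ)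

/-- `P(Φ, n, ε)`: supremum of `∑_{ω ∈ E} exp(φ_n ω)` over `(n,ε)`-separated sets `E`. -/
noncomputable def sepSum (M : Matrix (Fin k) (Fin k) ℕ) (Φ : ℕ → Space M → ℝ)
    (n : ℕ) (ε : ℝ) : ℝ :=
  sSup {s | ∃ E : Finset (Space M), IsSep M n ε E ∧ s = ∑ ω ∈ E, Real.exp (Φ n ω)}

/-- `P` is the topological pressure of the sequence `Φ`:
`P = lim_{ε→0⁺} limsup_n (1/n) log P(Φ,n,ε)`. -/
def IsPressure (M : Matrix (Fin k) (Fin k) ℕ) (Φ : ℕ → Space M → ℝ) (P : ℝ) : Prop :=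
  Tendsto (fun ε : ℝ => limsup (fun n : ℕ => Real.log (sepSum M Φ n ε) / n) atTop)
    (𝓝[>] (0 : ℝ)) (𝓝 P)

/-- The sequence `Φ = (φ_n)` is asymptotically additive. -/
def AsympAdd (M : Matrix (Fin k) (Fin k) ℕ) (Φ : ℕ → Space M → ℝ) : Prop :=
  (∀ n, Continuous (Φ n)) ∧
  ∀ ε > (0 : ℝ), ∃ ρ : Space M → ℝ, Continuous ρ ∧
    limsup (fun n : ℕ => (⨆ ω : Space M, |Φ n ω - birk M ρ n ω|) / n) atTop < ε

/-- `μ` is a weak Gibbs measure for the sequence `Φ` with constant `P`. -/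
def WeakGibbs (M : Matrix (Fin k) (Fin k) ℕ) (Φ : ℕ → Space M → ℝ) (P : ℝ)
    (μ : Measure (Space M)) : Prop :=
  ∃ K : ℕ → ℝ, (∀ n, 0 < K n) ∧ Tendsto (fun n : ℕ => Real.log (K n) / n) atTop (𝓝 0) ∧
    ∀ n : ℕ, ∀ w : Fin n → Fin k, ∀ ω ∈ cyl M n w,
      1 / K n ≤ (μ (cyl M n w)).toReal / Real.exp (Φ n ω - n * P) ∧
      (μ (cyl M n w)).toReal / Real.exp (Φ n ω - n * P) ≤ K n

/-- `μ` is a Gibbs measure for the sequence `Φ` with constant `P`. -/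
def Gibbs (M : Matrix (Fin k) (Fin k) ℕ) (Φ : ℕ → Space M → ℝ) (P : ℝ)
    (μ : Measure (Space M)) : Prop :=
  ∃ K : ℝ, 0 < K ∧
    ∀ n : ℕ, ∀ w : Fin n → Fin k, ∀ ω ∈ cyl M n w,
      1 / K ≤ (μ (cyl M n w)).toReal / Real.exp (Φ n ω - n * P) ∧
      (μ (cyl M n w)).toReal / Real.exp (Φ n ω - n * P) ≤ K

/-- Sum of `exp(φ_n ω)` over points of period `n`. -/
noncomputable def perSum (M : Matrix (Fin k) (Fin k) ℕ) (Φ : ℕ → Space M → ℝ) (n : ℕ) : ℝ :=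
  ∑' ω : {ω : Space M // (shift M)^[n] ω = ω}, Real.exp (Φ n ω.1)

/-- `var_n(g)`: the variation of `g` over cylinders of length `n`. -/
noncomputable def varCyl (M : Matrix (Fin k) (Fin k) ℕ) (n : ℕ) (g : Space M → ℝ) : ℝ :=
  sSup {x | ∃ ω κ : Space M, (∀ j : Fin n, ω.1 j.1 = κ.1 j.1) ∧ x = |g ω - g κ|}

open Classical in
/-- `∑_{C ∈ Z_n} exp (sup_C S_n φ)`: the cylinder partition sum of `φ`. -/
noncomputable def cylSum (M : Matrix (Fin k) (Fin k) ℕ) (φ : Space M → ℝ) (n : ℕ) : ℝ :=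
  ∑ w ∈ Finset.univ.filter (fun w : Fin n → Fin k => (cyl M n w).Nonempty),
    Real.exp (sSup (birk M φ n '' cyl M n w))

end WG

/-!
The weak Gibbs inequality at `n` says that `log μ(C_{i₁…i_n})` differs from `φ_n - nP` by at most
`|log K(n)| = o(n)`. Asymptotic additivity survives the linear term `nP` (subtract `P` from the
approximating function) and any sublinear perturbation, so it passes from `Φ` to `Ψ`.

For the pressure, two points of an `(n, ε)`-separated set must differ within their first `n + m`
letters, where `m` depends on `ε` only. Each `n`-cylinder thus meets the set in at most `k ^ m`
points, so the separated sums of `exp ψ_n = μ(C_{i₁…i_n})` are at most `k ^ m * μ(Σ)`. One point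
from each nonempty `n`-cylinder gives the sum `μ(Σ)`. Taking `(1/n) log` of these bounds gives
`P(Ψ) = 0`.
-/

namespace WG

/-! ### Suprema and upper limits of nearby real families -/

-- If one of the two sets is unbounded or empty then so is the other, and both suprema are `0`.
theorem sSup_le_sSup_add {s t : Set ℝ} {C : ℝ} (hC : 0 ≤ C)
    (hst : ∀ a ∈ s, ∃ b ∈ t, a ≤ b + C) (hts : ∀ b ∈ t, ∃ a ∈ s, b ≤ a + C) :
    sSup s ≤ sSup t + C := by
  by_cases ht : BddAbove t
  · rcases s.eq_empty_or_nonempty with rfl | hs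
    · obtain rfl : t = ∅ := eq_empty_of_forall_notMem fun b hb => by simpa using hts b hb
      simpa using hC
    · refine csSup_le hs fun a ha => ?_
      obtain ⟨b, hb, hab⟩ := hst a ha
      exact hab.trans (by gcongr; exact le_csSup ht hb)
  · have hs : ¬BddAbove s := by
      rintro ⟨B, hB⟩
      refine ht ⟨B + C, fun b hb => ?_⟩
      obtain ⟨a, ha, hba⟩ := hts b hb
      exact hba.trans (by gcongr; exact hB ha)
    simpa [Real.sSup_of_not_bddAbove ht, Real.sSup_of_not_bddAbove hs] using hC

theorem abs_sSup_sub_sSup_le {s t : Set ℝ} {C : ℝ} (hC : 0 ≤ C)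
    (hst : ∀ a ∈ s, ∃ b ∈ t, a ≤ b + C) (hts : ∀ b ∈ t, ∃ a ∈ s, b ≤ a + C) :
    |sSup s - sSup t| ≤ C :=
  abs_sub_le_iff.mpr ⟨sub_le_iff_le_add'.mpr (sSup_le_sSup_add hC hst hts),
    sub_le_iff_le_add'.mpr (sSup_le_sSup_add hC hts hst)⟩

theorem abs_iSup_sub_iSup_le {ι : Sort*} {f g : ι → ℝ} {C : ℝ} (hC : 0 ≤ C)
    (h : ∀ i, |f i - g i| ≤ C) : |(⨆ i, f i) - ⨆ i, g i| ≤ C := by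
  refine abs_sSup_sub_sSup_le hC ?_ ?_ <;> rintro _ ⟨i, rfl⟩ <;>
    exact ⟨_, mem_range_self i, by linarith [abs_sub_le_iff.mp (h i)]⟩

theorem limsup_eq_of_tendsto_sub_zero {ι : Type*} {l : Filter ι} {u v : ι → ℝ}
    (h : Tendsto (fun i => u i - v i) l (𝓝 0)) : limsup u l = limsup v l := by
  refine eq_of_forall_dist_le fun δ hδ => ?_
  have hclose : ∀ᶠ i in l, |u i - v i| < δ := by
    simpa [Real.dist_eq] using Metric.tendsto_nhds.mp h δ hδ
  rw [Real.dist_eq, limsup_eq, limsup_eq, Real.sInf_def, Real.sInf_def, neg_sub_neg]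
  refine abs_sSup_sub_sSup_le hδ.le ?_ ?_ <;>
  · refine fun a ha => ⟨a - δ, ?_, by simp⟩
    filter_upwards [hclose, ha] with i hi hia
    linarith [abs_sub_lt_iff.mp hi]

theorem tendsto_log_div_natCast_zero_of_mem_Icc {a : ℕ → ℝ} {c C : ℝ} (hc : 0 < c)
    (ha : ∀ n, a n ∈ Icc c C) : Tendsto (fun n : ℕ => Real.log (a n) / n) atTop (𝓝 0) :=
  tendsto_of_tendsto_of_tendsto_of_le_of_le
    (tendsto_const_div_atTop_nhds_zero_nat (Real.log c))
    (tendsto_const_div_atTop_nhds_zero_nat (Real.log C))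
    (fun n => div_le_div_of_nonneg_right (Real.log_le_log hc (ha n).1) n.cast_nonneg)
    (fun n => div_le_div_of_nonneg_right
      (Real.log_le_log (hc.trans_le (ha n).1) (ha n).2) n.cast_nonneg)

variable {k : ℕ} {M : Matrix (Fin k) (Fin k) ℕ}

/-! ### Stability of asymptotic additivity -/

theorem birk_sub_const (f : Space M → ℝ) (c : ℝ) (n : ℕ) (ω : Space M) :
    birk M (fun κ => f κ - c) n ω = birk M f n ω - n * c := by
  simp [birk, Finset.sum_sub_distrib]

theorem AsympAdd.sub_natCast_mul {Φ : ℕ → Space M → ℝ} (hΦ : AsympAdd M Φ) (c : ℝ) :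
    AsympAdd M fun n ω => Φ n ω - n * c := by
  refine ⟨fun n => (hΦ.1 n).sub continuous_const, fun ε hε => ?_⟩
  obtain ⟨ρ, hρ, hlim⟩ := hΦ.2 ε hε
  refine ⟨fun ω => ρ ω - c, hρ.sub continuous_const, ?_⟩
  simpa only [birk_sub_const, sub_sub_sub_cancel_right] using hlim

theorem AsympAdd.of_abs_sub_le {Φ Ψ : ℕ → Space M → ℝ} {L : ℕ → ℝ} (hΦ : AsympAdd M Φ)
    (hΨ : ∀ n, Continuous (Ψ n)) (hL : Tendsto (fun n : ℕ => L n / n) atTop (𝓝 0))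
    (h : ∀ n ω, |Ψ n ω - Φ n ω| ≤ L n) : AsympAdd M Ψ := by
  refine ⟨hΨ, fun ε hε => ?_⟩
  obtain ⟨ρ, hρ, hlim⟩ := hΦ.2 ε hε
  refine ⟨ρ, hρ, (limsup_eq_of_tendsto_sub_zero ?_).trans_lt hlim⟩
  refine squeeze_zero_norm (fun n => ?_) (by simpa using hL.abs)
  have hsup : |(⨆ ω, |Ψ n ω - birk M ρ n ω|) - (⨆ ω, |Φ n ω - birk M ρ n ω|)| ≤ |L n| :=
    abs_iSup_sub_iSup_le (abs_nonneg _) fun ω =>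
      calc |(|Ψ n ω - birk M ρ n ω| - |Φ n ω - birk M ρ n ω|)|
          ≤ |Ψ n ω - Φ n ω| := by
            simpa using abs_abs_sub_abs_le (Ψ n ω - birk M ρ n ω) (Φ n ω - birk M ρ n ω)
        _ ≤ |L n| := (h n ω).trans (le_abs_self _)
  rw [← sub_div, Real.norm_eq_abs, abs_div, abs_div (L n), Nat.abs_cast]
  gcongr

/-! ### Words and separated sets -/

theorem iterate_shift_apply (n : ℕ) (ω : Space M) (i : ℕ) :
    ((shift M)^[n] ω).1 i = ω.1 (i + n) := by
  induction n generalizing ω with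
  | zero => rfl
  | succ n ih => rw [Function.iterate_succ_apply, ih]; rfl

theorem continuous_word (n : ℕ) : Continuous (word M n) :=
  continuous_pi fun i => (continuous_apply i.1).comp continuous_subtype_val

theorem measurable_word (n : ℕ) : Measurable (word M n) :=
  measurable_pi_lambda _ fun i => (measurable_pi_apply i.1).comp measurable_subtype_coe

theorem mem_cyl_iff {n : ℕ} {w : Fin n → Fin k} {ω : Space M} :
    ω ∈ cyl M n w ↔ word M n ω = w :=
  funext_iff.symm

theorem cyl_eq_preimage_word (n : ℕ) (w : Fin n → Fin k) : cyl M n w = word M n ⁻¹' {w} :=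
  ext fun _ => mem_cyl_iff

theorem abs_sub_div_two_pow_le (a b : Fin k) (i : ℕ) :
    |((a : ℕ) : ℝ) - ((b : ℕ) : ℝ)| / 2 ^ (i + 1) ≤ (k : ℝ) / 2 / 2 ^ i := by
  have ha : ((a : ℕ) : ℝ) ≤ k := by exact_mod_cast a.2.le
  have hb : ((b : ℕ) : ℝ) ≤ k := by exact_mod_cast b.2.le
  rw [div_div, pow_succ']
  gcongr
  exact abs_sub_le_of_nonneg_of_le (Nat.cast_nonneg _) ha (Nat.cast_nonneg _) hb

theorem summable_dist' (ω κ : Space M) :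
    Summable fun i : ℕ => |((ω.1 i : ℕ) : ℝ) - ((κ.1 i : ℕ) : ℝ)| / 2 ^ (i + 1) :=
  .of_nonneg_of_le (fun _ => by positivity) (fun _ => abs_sub_div_two_pow_le _ _ _)
    (summable_geometric_two' _)

theorem dist'_le_of_forall_lt {ω κ : Space M} {m : ℕ} (h : ∀ j < m, ω.1 j = κ.1 j) :
    dist' M ω κ ≤ k / 2 ^ m := by
  have hhead : ∑ i ∈ Finset.range m, |((ω.1 i : ℕ) : ℝ) - ((κ.1 i : ℕ) : ℝ)| / 2 ^ (i + 1) = 0 :=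
    Finset.sum_eq_zero fun i hi => by simp [h i (Finset.mem_range.mp hi)]
  rw [dist', ← (summable_dist' ω κ).sum_add_tsum_nat_add m, hhead, zero_add,
    ← tsum_geometric_two' ((k : ℝ) / 2 ^ m)]
  refine Summable.tsum_le_tsum (fun i => ?_) ((summable_nat_add_iff m).mpr (summable_dist' ω κ))
    (summable_geometric_two' _)
  calc _ ≤ (k : ℝ) / 2 / 2 ^ (i + m) := abs_sub_div_two_pow_le _ _ _
    _ = (k : ℝ) / 2 ^ m / 2 / 2 ^ i := by rw [pow_add]; field_simp

theorem one_half_le_dist' {ω κ : Space M} (h : ω.1 0 ≠ κ.1 0) : 1 / 2 ≤ dist' M ω κ := by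
  have hletters : (1 : ℝ) ≤ |((ω.1 0 : ℕ) : ℝ) - ((κ.1 0 : ℕ) : ℝ)| := by
    exact_mod_cast Int.one_le_abs
      (sub_ne_zero.mpr (Nat.cast_injective.ne (Fin.val_ne_of_ne h)) :
        ((ω.1 0 : ℕ) : ℤ) - ((κ.1 0 : ℕ) : ℤ) ≠ 0)
  calc (1 : ℝ) / 2 ≤ |((ω.1 0 : ℕ) : ℝ) - ((κ.1 0 : ℕ) : ℝ)| / 2 ^ (0 + 1) := by
        rw [zero_add, pow_one]; gcongr
    _ ≤ dist' M ω κ := (summable_dist' ω κ).le_tsum 0 fun _ _ => by positivity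

theorem IsSep.injOn_word {n m : ℕ} {ε : ℝ} {E : Finset (Space M)} (hE : IsSep M n ε E)
    (hm : (k : ℝ) / 2 ^ m ≤ ε) : InjOn (word M (n + m)) E := by
  intro ω hω κ hκ hword
  by_contra hne
  obtain ⟨i, hi, hsep⟩ := hE ω hω κ hκ hne
  refine absurd hsep (not_lt.mpr ((dist'_le_of_forall_lt fun j hj => ?_).trans hm))
  simpa only [iterate_shift_apply, word] using congrFun hword ⟨j + i, by omega⟩

theorem isSep_of_injOn_word {n : ℕ} {ε : ℝ} (hε : ε < 1 / 2) {E : Finset (Space M)}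
    (hE : InjOn (word M n) E) : IsSep M n ε E := by
  intro ω hω κ hκ hne
  obtain ⟨i, hi⟩ := Function.ne_iff.mp (hE.ne hω hκ hne)
  refine ⟨i, i.2, hε.trans_le (one_half_le_dist' ?_)⟩
  simpa only [iterate_shift_apply, zero_add, word] using hi

theorem exists_finset_bijOn_word (M : Matrix (Fin k) (Fin k) ℕ) (n : ℕ) :
    ∃ E : Finset (Space M), BijOn (word M n) E (range (word M n)) := by
  obtain ⟨s, -, hs⟩ := (surjOn_image (word M n) univ).exists_bijOn_subset
  have hfin : s.Finite := .of_injOn hs.mapsTo hs.injOn (toFinite _)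
  exact ⟨hfin.toFinset, by simpa using hs⟩

/-! ### Sums of cylinder measures -/

theorem sum_comp_castAdd {α A : Type*} [Fintype α] [AddCommMonoid A] (n m : ℕ)
    (f : (Fin n → α) → A) :
    ∑ w : Fin (n + m) → α, f (w ∘ Fin.castAdd m) = Fintype.card α ^ m • ∑ v, f v := by
  rw [← (Fin.appendEquiv n m).sum_comp, Fintype.sum_prod_type]
  have happend (v : Fin n → α) (u : Fin m → α) : Fin.appendEquiv n m (v, u) ∘ Fin.castAdd m = v :=
    funext fun i => Fin.append_left v u i
  simp [happend, Finset.smul_sum]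

section CylinderSums

variable (μ : Measure (Space M)) [IsFiniteMeasure μ]

theorem sum_measureReal_cyl (n : ℕ) : ∑ w, μ.real (cyl M n w) = μ.real univ := by
  simpa [cyl_eq_preimage_word] using sum_measureReal_preimage_singleton (μ := μ) Finset.univ
    fun w _ => measurable_word n (measurableSet_singleton w)

theorem sum_measureReal_cyl_word_le {n m : ℕ} {E : Finset (Space M)}
    (hE : InjOn (word M (n + m)) E) :
    ∑ ω ∈ E, μ.real (cyl M n (word M n ω)) ≤ k ^ m * μ.real univ := by
  classical
  calc ∑ ω ∈ E, μ.real (cyl M n (word M n ω))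
      = ∑ w ∈ E.image (word M (n + m)), μ.real (cyl M n (w ∘ Fin.castAdd m)) :=
        (Finset.sum_image (f := fun w => μ.real (cyl M n (w ∘ Fin.castAdd m))) hE).symm
    _ ≤ ∑ w : Fin (n + m) → Fin k, μ.real (cyl M n (w ∘ Fin.castAdd m)) :=
        Finset.sum_le_univ_sum_of_nonneg fun _ => measureReal_nonneg
    _ = k ^ m * μ.real univ := by
        simp [sum_comp_castAdd n m fun v => μ.real (cyl M n v), sum_measureReal_cyl]

theorem sum_measureReal_cyl_word_eq {n : ℕ} {E : Finset (Space M)}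
    (hE : BijOn (word M n) E (range (word M n))) :
    ∑ ω ∈ E, μ.real (cyl M n (word M n ω)) = μ.real univ := by
  rw [← sum_measureReal_cyl μ n]
  refine Finset.sum_of_injOn (word M n) hE.injOn (by simp) (fun w _ hw => ?_) fun _ _ => rfl
  have hempty : cyl M n w = ∅ := by
    rwa [cyl_eq_preimage_word, preimage_singleton_eq_empty, ← hE.image_eq]
  simp [hempty]

end CylinderSums

/-! ### The sequence of logarithms of cylinder measures -/

/-- The sequence `ψ_n(ω) = log μ(C_{ω₁…ω_n})`. Since `Real.log 0 = 0`, it is meaningful only where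
the cylinders have positive measure. -/
noncomputable def logCyl (μ : Measure (Space M)) (n : ℕ) (ω : Space M) : ℝ :=
  Real.log (μ.real (cyl M n (word M n ω)))

/-- Every nonempty cylinder has positive and finite measure, which is what makes `logCyl μ` a
genuine logarithm. A nonempty cylinder is written as the cylinder around one of its points. -/
def ChargesCylinders (μ : Measure (Space M)) : Prop :=
  ∀ n ω, 0 < μ.real (cyl M n (word M n ω))

section LogCyl

variable {μ : Measure (Space M)}

theorem continuous_logCyl (μ : Measure (Space M)) (n : ℕ) : Continuous (logCyl μ n) :=
  (continuous_of_discreteTopology (f := fun w => Real.log (μ.real (cyl M n w)))).comp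
    (continuous_word n)

theorem ChargesCylinders.exp_logCyl (hμ : ChargesCylinders μ) (n : ℕ) (ω : Space M) :
    Real.exp (logCyl μ n ω) = μ.real (cyl M n (word M n ω)) :=
  Real.exp_log (hμ n ω)

theorem ChargesCylinders.measureReal_div_exp_logCyl (hμ : ChargesCylinders μ) {n : ℕ}
    {w : Fin n → Fin k} {ω : Space M} (hω : ω ∈ cyl M n w) :
    μ.real (cyl M n w) / Real.exp (logCyl μ n ω - n * 0) = 1 := by
  obtain rfl := mem_cyl_iff.mp hω
  rw [mul_zero, sub_zero, hμ.exp_logCyl, div_self (hμ n ω).ne']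

theorem ChargesCylinders.gibbs_logCyl (hμ : ChargesCylinders μ) : Gibbs M (logCyl μ) 0 μ :=
  ⟨1, one_pos, fun _ _ _ hω =>
    ⟨(div_one _).trans_le (hμ.measureReal_div_exp_logCyl hω).ge,
      (hμ.measureReal_div_exp_logCyl hω).le⟩⟩

theorem ChargesCylinders.sepSum_logCyl_mem_Icc [IsFiniteMeasure μ] (hμ : ChargesCylinders μ)
    {m : ℕ} {ε : ℝ} (hm : (k : ℝ) / 2 ^ m ≤ ε) (hε : ε < 1 / 2) (n : ℕ) :
    sepSum M (logCyl μ) n ε ∈ Icc (μ.real univ) (k ^ m * μ.real univ) := by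
  have hupper : ∀ s ∈ {s | ∃ E, IsSep M n ε E ∧ s = ∑ ω ∈ E, Real.exp (logCyl μ n ω)},
      s ≤ k ^ m * μ.real univ := by
    rintro _ ⟨E, hE, rfl⟩
    simpa only [hμ.exp_logCyl] using sum_measureReal_cyl_word_le μ (hE.injOn_word hm)
  obtain ⟨E, hE⟩ := exists_finset_bijOn_word M n
  refine ⟨le_csSup ⟨_, hupper⟩ ⟨E, isSep_of_injOn_word hε hE.injOn, ?_⟩,
    Real.sSup_le hupper (by positivity)⟩
  simp only [hμ.exp_logCyl, sum_measureReal_cyl_word_eq μ hE]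

theorem ChargesCylinders.isPressure_logCyl [IsFiniteMeasure μ] [NeZero μ]
    (hμ : ChargesCylinders μ) : IsPressure M (logCyl μ) 0 := by
  refine tendsto_const_nhds.congr' ?_
  filter_upwards [Ioo_mem_nhdsGT (show (0 : ℝ) < 1 / 2 by norm_num)] with ε hε
  have hdecay : Tendsto (fun m : ℕ => (k : ℝ) / 2 ^ m) atTop (𝓝 0) :=
    tendsto_const_nhds.div_atTop (tendsto_pow_atTop_atTop_of_one_lt one_lt_two)
  obtain ⟨m, hm⟩ := (hdecay.eventually_le_const hε.1).exists
  exact (tendsto_log_div_natCast_zero_of_mem_Icc measureReal_univ_pos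
    (hμ.sepSum_logCyl_mem_Icc hm hε.2)).limsup_eq.symm

end LogCyl

/-! ### Weak Gibbs measures -/

section WeakGibbs

variable {Φ : ℕ → Space M → ℝ} {P : ℝ} {μ : Measure (Space M)}

theorem WeakGibbs.chargesCylinders (h : WeakGibbs M Φ P μ) : ChargesCylinders μ := by
  obtain ⟨K, hK, -, hbound⟩ := h
  intro n ω
  have hratio := (one_div_pos.mpr (hK n)).trans_le (hbound n _ ω (mem_cyl_iff.mpr rfl)).1
  exact (div_pos_iff_of_pos_right (Real.exp_pos _)).mp hratio

theorem WeakGibbs.exists_abs_logCyl_sub_le (h : WeakGibbs M Φ P μ) :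
    ∃ L : ℕ → ℝ, Tendsto (fun n : ℕ => L n / n) atTop (𝓝 0) ∧
      ∀ n ω, |logCyl μ n ω - (Φ n ω - n * P)| ≤ L n := by
  have hpos := h.chargesCylinders
  obtain ⟨K, hK, hKlim, hbound⟩ := h
  refine ⟨fun n => Real.log (K n), hKlim, fun n ω => ?_⟩
  obtain ⟨hlower, hupper⟩ := hbound n _ ω (mem_cyl_iff.mpr rfl)
  have hlog : logCyl μ n ω - (Φ n ω - n * P) =
      Real.log (μ.real (cyl M n (word M n ω)) / Real.exp (Φ n ω - n * P)) := by
    rw [Real.log_div (hpos n ω).ne' (Real.exp_ne_zero _), Real.log_exp, logCyl]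
  rw [hlog, abs_le, ← Real.log_inv, ← one_div]
  exact ⟨Real.log_le_log (one_div_pos.mpr (hK n)) hlower,
    Real.log_le_log (div_pos (hpos n ω) (Real.exp_pos _)) hupper⟩

theorem WeakGibbs.asympAdd_logCyl (h : WeakGibbs M Φ P μ) (hΦ : AsympAdd M Φ) :
    AsympAdd M (logCyl μ) := by
  obtain ⟨L, hL, hbound⟩ := h.exists_abs_logCyl_sub_le
  exact (hΦ.sub_natCast_mul P).of_abs_sub_le (continuous_logCyl μ) hL hbound

end WeakGibbs

end WG

open WG in
theorem weakGibbs_is_gibbs_for_asympAdd_general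
    {k : ℕ} (M : Matrix (Fin k) (Fin k) ℕ)
    (Φ : ℕ → Space M → ℝ) (hΦ : AsympAdd M Φ) (P : ℝ) (hP : IsPressure M Φ P)
    (μ : Measure (Space M)) [IsFiniteMeasure μ] [NeZero μ]
    (hwg : WeakGibbs M Φ P μ) :
    ∃ Ψ : ℕ → Space M → ℝ,
      (∀ n : ℕ, ∀ ω : Space M, Ψ n ω = Real.log ((μ (cyl M n (word M n ω))).toReal)) ∧
      AsympAdd M Ψ ∧ IsPressure M Ψ 0 ∧
      (∀ n : ℕ, ∀ w : Fin n → Fin k, ∀ ω ∈ cyl M n w,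
        (μ (cyl M n w)).toReal / Real.exp (Ψ n ω - n * 0) = 1) ∧
      Gibbs M Ψ 0 μ :=
  have hμ : ChargesCylinders μ := hwg.chargesCylinders
  ⟨logCyl μ, fun _ _ => rfl, hwg.asympAdd_logCyl hΦ, hμ.isPressure_logCyl,
    fun _ _ _ hω => hμ.measureReal_div_exp_logCyl hω, hμ.gibbs_logCyl⟩

open WG in
/-- Theorem `main-weak`: a weak Gibbs measure `μ` for an asymptotically
additive sequence `Φ` on a topologically mixing subshift of finite type is a Gibbs measure
for the asymptotically additive sequence `Ψ` given by `ψ_n(ω) = log μ(C_{i₁…i_n})`;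
moreover `P(Ψ) = 0` and the Gibbs ratio equals `1`. -/
theorem weakGibbs_is_gibbs_for_asympAdd
    {k : ℕ} (M : Matrix (Fin k) (Fin k) ℕ) (hmix : Mixing M)
    (Φ : ℕ → Space M → ℝ) (hΦ : AsympAdd M Φ) (P : ℝ) (hP : IsPressure M Φ P)
    (μ : Measure (Space M)) (hμ : IsProbabilityMeasure μ)
    (hwg : WeakGibbs M Φ P μ) :
    ∃ Ψ : ℕ → Space M → ℝ,
      (∀ n : ℕ, ∀ ω : Space M, Ψ n ω = Real.log ((μ (cyl M n (word M n ω))).toReal)) ∧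
      AsympAdd M Ψ ∧ IsPressure M Ψ 0 ∧
      (∀ n : ℕ, ∀ w : Fin n → Fin k, ∀ ω ∈ cyl M n w,
        (μ (cyl M n w)).toReal / Real.exp (Ψ n ω - n * 0) = 1) ∧
      Gibbs M Ψ 0 μ := by
  exact weakGibbs_is_gibbs_for_asympAdd_general M Φ hΦ P hP μ hwg
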